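/- Let (Σ_T^+, σ) be a mixing one-sided subshift of finite type, (Σ_T, σ) its natural extension, π the projection, Φ a subadditive potential on (Σ_T^+, σ), and Ψ = Φ∘π. Then Φ has a unique equilibrium state on (Σ_T^+, σ) if and only if Ψ has a unique equilibrium state on (Σ_T, σ); in this case the unique equilibrium state of Ψ is the natural extension of the unique equilibrium state of Φ. -/

import Mathlib

/-!
The projection `π : Σ_T → Σ_T^+` induces a bijection between shift-invariant probability measures,
and this bijection preserves every quantity in the definition of an equilibrium state, so it
restricts to a bijection between equilibrium states of `Φ ∘ π` and of `Φ`.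

*Bijection.* By invariance `ν` has the same image under `x ↦ (x_i)_{i ≥ -N}` as under `π`
(`map_projFrom`), and these images determine `ν` (`measure_ext_projFrom`). Conversely, given an
invariant `μ`, extend one-sided sequences to the left in a measurable way (primitivity gives every
symbol a predecessor), push `μ` forward, and take a weak limit of the shifted measures
(`exists_naturalExtension`).

*Entropy.* The partition into the `0`-th symbol generates both systems, and its refinements are
identified by `π`, so it suffices to have the Kolmogorov–Sinai theorem
(`entropyKS_eq_of_generator`). Only subadditivity of `H` is used for it: the atoms of a finite
partition `ξ` are approximated by sets visible in a finite window of the generator, and the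
partition `d` recording where the approximation fails has small entropy, whence
`h(ξ) ≤ h(p) + H(d)`.

*Pressure.* At a scale `ε` only `m` coordinates on each side of `0` are visible, so a separated
subset of `Σ_T` splits into at most `q ^ m` classes on which `π` is injective with separated image.
The separated sums thus differ by a factor independent of `n`, which disappears in the exponential
growth rate (`pressure_eq`).

*Integrals.* `∫ log φ_n ∘ π dν = ∫ log φ_n d(π_* ν)` by change of variables.
-/

open Filter MeasureTheory
open scoped ENNReal

namespace SubEq

variable {X : Type*}

/-! ### Bowen balls, separated sets, topological pressure -/

/-- The Bowen ball `B_n(x,ε)` with respect to a distance function `ρ` and a map `f`. -/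
def bowenBall (ρ : X → X → ℝ) (f : X → X) (n : ℕ) (ε : ℝ) (x : X) : Set X :=
  {y | ∀ k < n, ρ (f^[k] x) (f^[k] y) ≤ ε}

/-- `E` is `(n,ε)`-separated for `f` with respect to the distance `ρ`. -/
def IsSeparatedSet (ρ : X → X → ℝ) (f : X → X) (n : ℕ) (ε : ℝ) (E : Finset X) : Prop :=
  ∀ x ∈ E, ∀ y ∈ E, x ≠ y → ∃ k < n, ε ≤ ρ (f^[k] x) (f^[k] y)

/-- The subadditive topological pressure
`P(Φ) = lim_{ε→0} limsup_n (1/n) log sup { Σ_{x∈E} φ_n x : E (n,ε)-separated }`;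
since the inner quantity is monotone as `ε` decreases, the limit as `ε → 0` is the
supremum over `ε > 0`. -/
noncomputable def pressure (ρ : X → X → ℝ) (f : X → X) (φ : ℕ → X → ℝ) : ℝ :=
  sSup {p : ℝ | ∃ ε > (0:ℝ), p = atTop.limsup (fun n =>
    Real.log (sSup ((fun E : Finset X => ∑ x ∈ E, φ n x) ''
      {E : Finset X | IsSeparatedSet ρ f n ε E})) / n)}

/-- `Φ = {log φ_n}` is a subadditive potential on `(X,f)`:
each `φ_n` is continuous and positive and
`log φ_{m+n} ≤ log φ_m + log φ_n ∘ f^m`. -/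
def IsSubadditivePotential [TopologicalSpace X] (f : X → X) (φ : ℕ → X → ℝ) : Prop :=
  (∀ n, Continuous (φ n)) ∧ (∀ n x, 0 < φ n x) ∧
    ∀ m n, 1 ≤ m → 1 ≤ n → ∀ x : X,
      Real.log (φ (m + n) x) ≤ Real.log (φ m x) + Real.log (φ n (f^[m] x))

/-! ### Kolmogorov–Sinai entropy -/

/-- Static entropy `H_μ(ξ)` of the finite partition of `X` given by the fibers of
`p : X → ι`. -/
noncomputable def partInfo [MeasurableSpace X] (μ : Measure X) {ι : Type} [Fintype ι]
    (p : X → ι) : ℝ :=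
  ∑ i : ι, Real.negMulLog ((μ (p ⁻¹' {i})).toReal)

/-- The dynamical refinement `⋁_{k=0}^{n-1} f^{-k} ξ` of the partition given by `p`. -/
def refinePart (f : X → X) {ι : Type} (p : X → ι) (n : ℕ) : X → (Fin n → ι) :=
  fun x k => p (f^[(k : ℕ)] x)

/-- Entropy of `f` relative to the partition given by `p`; by subadditivity the limit
defining it equals the infimum. -/
noncomputable def entropyOfPart [MeasurableSpace X] (μ : Measure X) (f : X → X)
    {ι : Type} [Fintype ι] (p : X → ι) : ℝ :=
  ⨅ n : ℕ, partInfo μ (refinePart f p (n + 1)) / (n + 1)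

/-- The Kolmogorov–Sinai entropy `h_μ(f)`: the supremum over all finite measurable
partitions of the corresponding partition entropies. -/
noncomputable def entropyKS [MeasurableSpace X] (μ : Measure X) (f : X → X) : ℝ :=
  sSup {h : ℝ | ∃ (m : ℕ) (p : X → Fin m),
    (∀ i, MeasurableSet (p ⁻¹' {i})) ∧ h = entropyOfPart μ f p}

/-! ### Equilibrium states -/

/-- `μ` is an equilibrium state of the subadditive potential `Φ = {log φ_n}`:
it is an `f`-invariant Borel probability measure with
`h_μ(f) + lim_n (1/n) ∫ log φ_n dμ = P(Φ)`. -/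
def IsEqState [TopologicalSpace X] [MeasurableSpace X] (ρ : X → X → ℝ) (f : X → X)
    (φ : ℕ → X → ℝ) (μ : Measure X) : Prop :=
  IsProbabilityMeasure μ ∧ MeasurePreserving f μ μ ∧
    ∃ L : ℝ, Tendsto (fun n => (∫ x, Real.log (φ n x) ∂μ) / n) atTop (nhds L) ∧
      entropyKS μ f + L = pressure ρ f φ

/-- Bounded distortion: there is `C ≥ 1` such that for all sufficiently small `ε > 0`,
all `x`, `n` and all `y,z ∈ B_n(x,ε)` one has `C⁻¹ ≤ φ_n(y)/φ_n(z) ≤ C`. -/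
def HasBoundedDistortion (ρ : X → X → ℝ) (f : X → X) (φ : ℕ → X → ℝ) : Prop :=
  ∃ C : ℝ, 1 ≤ C ∧ ∃ ε₀ > (0:ℝ), ∀ ε, 0 < ε → ε ≤ ε₀ → ∀ (x : X) (n : ℕ),
    ∀ y ∈ bowenBall ρ f n ε x, ∀ z ∈ bowenBall ρ f n ε x,
      C⁻¹ ≤ φ n y / φ n z ∧ φ n y / φ n z ≤ C

/-- The lower subadditive Gibbs property:
for every `ε > 0` there is `C ≥ 1` with `μ(B_n(x,ε)) ≥ C⁻¹ e^{-nP(Φ)} φ_n(x)`. -/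
def HasLowerGibbs [TopologicalSpace X] [MeasurableSpace X] (ρ : X → X → ℝ) (f : X → X)
    (φ : ℕ → X → ℝ) (μ : Measure X) : Prop :=
  ∀ ε > (0:ℝ), ∃ C : ℝ, 1 ≤ C ∧ ∀ (x : X) (n : ℕ),
    ENNReal.ofReal (C⁻¹ * Real.exp (-(n : ℝ) * pressure ρ f φ) * φ n x)
      ≤ μ (bowenBall ρ f n ε x)

/-- Expansivity of an invertible map `f` with inverse `finv`. -/
def IsExpansive (ρ : X → X → ℝ) (f finv : X → X) : Prop :=
  ∃ ε₀ > (0:ℝ), ∀ x y : X,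
    (∀ n : ℕ, ρ (f^[n] x) (f^[n] y) ≤ ε₀ ∧ ρ (finv^[n] x) (finv^[n] y) ≤ ε₀) → x = y

/-! ### Mixing properties -/

/-- The Kolmogorov property of the invertible measure-preserving system `(X,μ,f)`
(`finv` is the inverse of `f`): there is a sub-σ-algebra `K` with `K ⊆ fK`,
`⋁_{n≥0} f^n K` the full σ-algebra, and `⋂_{n≥0} f^{-n} K` trivial mod `μ`. -/
def HasKProperty [m : MeasurableSpace X] (μ : Measure X) (f finv : X → X) : Prop :=
  ∃ K : MeasurableSpace X, K ≤ m ∧ K ≤ K.map f ∧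
    (⨆ n : ℕ, K.map (f^[n])) = m ∧
    ∀ A : Set X, MeasurableSet[⨅ n : ℕ, K.map (finv^[n])] A → μ A = 0 ∨ μ A = 1

/-- Mixing of a measure-preserving system. -/
def IsMixing [MeasurableSpace X] (μ : Measure X) (f : X → X) : Prop :=
  ∀ A B : Set X, MeasurableSet A → MeasurableSet B →
    Tendsto (fun n => μ ((f^[n]) ⁻¹' A ∩ B)) atTop (nhds (μ A * μ B))

/-- A set of natural numbers has upper density zero. -/
def UpperDensityZero (E : Set ℕ) : Prop :=
  Tendsto (fun n => (Nat.card (E ∩ Set.Iio n : Set ℕ) : ℝ) / n) atTop (nhds 0)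

/-- Weak mixing: for all measurable `A,B` there is a set `E ⊆ ℕ` of upper density zero
such that `μ(f^n A ∩ B) → μ(A)μ(B)` along `n ∉ E`. -/
def IsWeaklyMixing [MeasurableSpace X] (μ : Measure X) (f : X → X) : Prop :=
  ∀ A B : Set X, MeasurableSet A → MeasurableSet B →
    ∃ E : Set ℕ, UpperDensityZero E ∧
      Tendsto (fun n => μ ((f^[n]) ⁻¹' A ∩ B)) (atTop ⊓ Filter.principal Eᶜ)
        (nhds (μ A * μ B))

/-- Total ergodicity: `f^n` is ergodic for every `n ≥ 1`. -/
def IsTotallyErgodic [MeasurableSpace X] (μ : Measure X) (f : X → X) : Prop :=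
  ∀ n : ℕ, 1 ≤ n → Ergodic (f^[n]) μ

/-! ### Measure-theoretic isomorphism and the Bernoulli property -/

/-- Measure-theoretic isomorphism of the systems `(X,μ,f)` and `(Y,ν,g)`. -/
def IsMeasureIso {Y : Type*} [MeasurableSpace X] [MeasurableSpace Y]
    (μ : Measure X) (ν : Measure Y) (f : X → X) (g : Y → Y) : Prop :=
  ∃ Θ : X → Y, Measurable Θ ∧ Measure.map Θ μ = ν ∧
    (∀ᵐ x ∂μ, Θ (f x) = g (Θ x)) ∧
    ∃ Ψ : Y → X, Measurable Ψ ∧ (∀ᵐ x ∂μ, Ψ (Θ x) = x) ∧ (∀ᵐ y ∂ν, Θ (Ψ y) = y)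

/-- The left shift on a full shift space `ℤ → ι`. -/
def fullShift {ι : Type*} : (ℤ → ι) → (ℤ → ι) := fun x i => x (i + 1)

/-- `(X,μ,f)` is Bernoulli: it is measurably isomorphic to a Bernoulli shift, i.e. to a
two-sided full shift on a finite alphabet equipped with a product (i.i.d.) measure. -/
def IsBernoulli [MeasurableSpace X] (μ : Measure X) (f : X → X) : Prop :=
  ∃ (m : ℕ) (p : Fin m → ℝ≥0∞), (∑ i : Fin m, p i) = 1 ∧
    ∃ ν : Measure (ℤ → Fin m),
      (∀ (s : Finset ℤ) (a : ℤ → Fin m),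
        ν {x : ℤ → Fin m | ∀ i ∈ s, x i = a i} = ∏ i ∈ s, p (a i)) ∧
      IsMeasureIso μ ν f fullShift
/-! ### Two-sided subshifts of finite type -/

/-- The two-sided subshift of finite type determined by the 0-1 (Boolean) adjacency
matrix `T` on `q` symbols. -/
abbrev SigmaSFT (q : ℕ) (T : Fin q → Fin q → Bool) : Type :=
  {x : ℤ → Fin q // ∀ i : ℤ, T (x i) (x (i + 1)) = true}

variable {q : ℕ} {T : Fin q → Fin q → Bool}

/-- The left shift on `Σ_T`. -/
def shiftSFT : SigmaSFT q T → SigmaSFT q T :=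
  fun x => ⟨fun i => x.1 (i + 1), fun i => by simpa [add_assoc] using x.2 (i + 1)⟩

/-- The inverse of the left shift on `Σ_T`. -/
def shiftSFTInv : SigmaSFT q T → SigmaSFT q T :=
  fun x => ⟨fun i => x.1 (i - 1), fun i => by
    have h := x.2 (i - 1)
    rwa [show i - 1 + 1 = i + 1 - 1 by ring] at h⟩

lemma exists_disagree {x y : SigmaSFT q T} (h : x ≠ y) :
    ∃ n : ℕ, x.1 (n : ℤ) ≠ y.1 (n : ℤ) ∨ x.1 (-(n : ℤ)) ≠ y.1 (-(n : ℤ)) := by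
  by_contra hc
  push_neg at hc
  refine h (Subtype.ext (funext fun i => ?_))
  rcases Int.natAbs_eq i with h' | h'
  · rw [h']; exact (hc i.natAbs).1
  · rw [h']; exact (hc i.natAbs).2

open Classical in
/-- The metric `d(x,y) = 2^{-k}` on `Σ_T`, where `k` is the largest integer such that
`x_i = y_i` for all `|i| < k`. -/
noncomputable def distSFT (x y : SigmaSFT q T) : ℝ :=
  if h : x = y then 0
  else (2 : ℝ) ^ (-(Nat.find (exists_disagree h) : ℤ))

/-- Primitivity of the adjacency matrix `T` (equivalent to topological mixing of the
subshift): some power `T^N` has all entries positive, i.e. any two symbols are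
connected by an admissible word of length `N+1`. -/
def IsPrimitive (T : Fin q → Fin q → Bool) : Prop :=
  ∃ N : ℕ, 1 ≤ N ∧ ∀ i j : Fin q, ∃ w : ℕ → Fin q, w 0 = i ∧ w N = j ∧
    ∀ k < N, T (w k) (w (k + 1)) = true

/-! ### Admissible words and cylinders -/

/-- A word is admissible if consecutive symbols are allowed by `T`. -/
def IsAdmissible (T : Fin q → Fin q → Bool) (I : List (Fin q)) : Prop :=
  I ≠ [] ∧ I.Chain' (fun a b => T a b = true)

/-- The cylinder set `[I] = {x : x_0 … x_{n-1} = I}` of a word `I` of length `n`. -/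
def cylinder (I : List (Fin q)) : Set (SigmaSFT q T) :=
  {x | ∀ (k : ℕ) (hk : k < I.length), x.1 (k : ℤ) = I.get ⟨k, hk⟩}

/-- `Φ̃(I) = sup_{x ∈ [I]} φ_{|I|}(x)`. -/
noncomputable def wordSup (φ : ℕ → SigmaSFT q T → ℝ) (I : List (Fin q)) : ℝ :=
  sSup ((fun x => φ I.length x) '' cylinder I)

/-- Quasi-multiplicativity of a subadditive potential `Φ` on `Σ_T`: there are `c > 0`
and `k ∈ ℕ` such that any two admissible words `I, J` can be connected by a word `K`
of length `≤ k` with `IKJ` admissible and `Φ̃(IKJ) ≥ c Φ̃(I) Φ̃(J)`. -/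
def IsQuasiMultiplicative (T : Fin q → Fin q → Bool)
    (φ : ℕ → SigmaSFT q T → ℝ) : Prop :=
  ∃ c > (0:ℝ), ∃ k : ℕ, ∀ I J : List (Fin q), IsAdmissible T I → IsAdmissible T J →
    ∃ K : List (Fin q), K.length ≤ k ∧ IsAdmissible T (I ++ K ++ J) ∧
      wordSup φ (I ++ K ++ J) ≥ c * wordSup φ I * wordSup φ J
/-! ### One-sided subshifts of finite type and the natural extension -/

/-- The one-sided subshift of finite type determined by `T`. -/
abbrev SigmaSFTPlus (q : ℕ) (T : Fin q → Fin q → Bool) : Type :=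
  {x : ℕ → Fin q // ∀ i : ℕ, T (x i) (x (i + 1)) = true}

variable {q : ℕ} {T : Fin q → Fin q → Bool}

/-- The left shift on `Σ_T^+`. -/
def shiftPlus : SigmaSFTPlus q T → SigmaSFTPlus q T :=
  fun x => ⟨fun i => x.1 (i + 1), fun i => x.2 (i + 1)⟩

lemma exists_disagree_plus {x y : SigmaSFTPlus q T} (h : x ≠ y) :
    ∃ n : ℕ, x.1 n ≠ y.1 n := by
  by_contra hc
  push_neg at hc
  exact h (Subtype.ext (funext hc))

open Classical in
/-- The metric `d(x,y) = 2^{-k}` on `Σ_T^+`, where `k` is the largest integer such that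
`x_i = y_i` for all `0 ≤ i < k`. -/
noncomputable def distSFTPlus (x y : SigmaSFTPlus q T) : ℝ :=
  if h : x = y then 0
  else (2 : ℝ) ^ (-(Nat.find (exists_disagree_plus h) : ℤ))

/-- The projection `π : Σ_T → Σ_T^+`, `(x_i)_{i∈ℤ} ↦ (x_i)_{i≥0}`, exhibiting `Σ_T`
as the natural extension of `Σ_T^+`. -/
def projPlus : SigmaSFT q T → SigmaSFTPlus q T :=
  fun x => ⟨fun i => x.1 (i : ℤ), fun i => by
    have h := x.2 (i : ℤ)
    simpa using h⟩

/-! ### Static entropy of finite partitions -/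

/-- The partition of `X` into the fibers of `p` is measurable. -/
def MeasurableFibers [MeasurableSpace X] {ι : Type} (p : X → ι) : Prop :=
  ∀ i, MeasurableSet (p ⁻¹' {i})

section Static

variable [MeasurableSpace X] {ι κ τ : Type}

lemma MeasurableFibers.comp_measurable {p : X → ι} (hp : MeasurableFibers p) {g : X → X}
    (hg : Measurable g) : MeasurableFibers (fun x => p (g x)) :=
  fun i => hg (hp i)

lemma MeasurableFibers.pi {n : ℕ} {p : Fin n → X → ι} (hp : ∀ k, MeasurableFibers (p k)) :
    MeasurableFibers (fun x k => p k x) := by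
  intro w
  have : (fun x k => p k x) ⁻¹' {w} = ⋂ k, (p k) ⁻¹' {w k} := by
    ext x; simp [funext_iff]
  rw [this]
  exact MeasurableSet.iInter fun k => hp k _

lemma MeasurableFibers.prodMk {p : X → ι} {r : X → κ} (hp : MeasurableFibers p)
    (hr : MeasurableFibers r) : MeasurableFibers (fun x => (p x, r x)) := by
  rintro ⟨i, j⟩
  have : (fun x => (p x, r x)) ⁻¹' {(i, j)} = p ⁻¹' {i} ∩ r ⁻¹' {j} := by
    ext x; simp
  rw [this]
  exact (hp i).inter (hr j)

lemma MeasurableFibers.measurableSet_preimage [Finite ι] {p : X → ι} (hp : MeasurableFibers p)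
    (s : Set ι) : MeasurableSet (p ⁻¹' s) := by
  have : p ⁻¹' s = ⋃ i ∈ s, p ⁻¹' {i} := by ext x; simp
  rw [this]
  exact MeasurableSet.biUnion (Set.to_countable s) fun i _ => hp i

variable [Fintype ι] [Fintype κ] [Fintype τ]

lemma negMulLog_sum_le {σ : Type} (s : Finset σ) (a : σ → ℝ) (ha : ∀ i ∈ s, 0 ≤ a i) :
    Real.negMulLog (∑ i ∈ s, a i) ≤ ∑ i ∈ s, Real.negMulLog (a i) := by
  rw [Real.negMulLog, ← Finset.sum_neg_distrib, Finset.sum_mul]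
  refine Finset.sum_le_sum fun i hi => ?_
  rw [Real.negMulLog]
  rcases (ha i hi).eq_or_lt with h0 | h0
  · simp [← h0]
  · have := Real.log_le_log h0 (Finset.single_le_sum ha hi)
    nlinarith

/-- Coarsening a partition does not increase its entropy. -/
lemma partInfo_le_of_determines (μ : Measure X) [IsProbabilityMeasure μ] {p : X → κ} {r : X → ι}
    (hr : MeasurableFibers r) (h : ∀ x y, r x = r y → p x = p y) :
    partInfo μ p ≤ partInfo μ r := by
  classical
  obtain ⟨x₀⟩ : Nonempty X := μ.nonempty_of_neZero
  have : Nonempty κ := ⟨p x₀⟩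
  obtain ⟨g, rfl⟩ := (Function.factorsThrough_iff (g := p) (f := r)).1 fun x y hxy => h x y hxy
  unfold partInfo
  rw [← Finset.sum_fiberwise (s := Finset.univ) (g := g)
    (f := fun i => Real.negMulLog ((μ (r ⁻¹' {i})).toReal))]
  refine Finset.sum_le_sum fun j _ => ?_
  have key : (μ ((g ∘ r) ⁻¹' {j})).toReal
      = ∑ i ∈ Finset.univ.filter (fun i => g i = j), (μ (r ⁻¹' {i})).toReal := by
    have := sum_measureReal_preimage_singleton (μ := μ)
      (Finset.univ.filter (fun i => g i = j)) (f := r) fun i _ => hr i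
    simp only [Measure.real] at this
    rw [this]
    congr 2
    ext x; simp
  rw [key]
  exact negMulLog_sum_le _ _ fun i _ => ENNReal.toReal_nonneg

/-- The pointwise form of Gibbs' inequality behind the subadditivity of entropy. -/
lemma negMulLog_le_of_le {a b c : ℝ} (hc : 0 ≤ c) (hca : c ≤ a) (hcb : c ≤ b) :
    Real.negMulLog c ≤ -(c * Real.log a) - c * Real.log b + (a * b - c) := by
  rcases hc.eq_or_lt with rfl | hc
  · have := mul_nonneg hca hcb
    simpa using this
  · have ha : 0 < a := hc.trans_le hca
    have hb : 0 < b := hc.trans_le hcb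
    have h1 := Real.log_le_sub_one_of_pos (div_pos (mul_pos ha hb) hc)
    rw [Real.log_div (mul_pos ha hb).ne' hc.ne', Real.log_mul ha.ne' hb.ne'] at h1
    have h2 := mul_le_mul_of_nonneg_left h1 hc.le
    have h3 : c * (a * b / c - 1) = a * b - c := by field_simp
    rw [Real.negMulLog]
    nlinarith

lemma sum_measure_fibers (μ : Measure X) [IsFiniteMeasure μ] {r : X → ι}
    (hr : MeasurableFibers r) (A : Set X) :
    ∑ i, (μ (A ∩ r ⁻¹' {i})).toReal = (μ A).toReal := by
  have := sum_measureReal_preimage_singleton (μ := μ.restrict A) Finset.univ (f := r)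
    fun i _ => hr i
  simpa [Measure.real, Measure.restrict_apply (hr _), Set.inter_comm]
    using this

lemma partInfo_prodMk_le (μ : Measure X) [IsProbabilityMeasure μ] {p : X → ι} {r : X → κ}
    (hp : MeasurableFibers p) (hr : MeasurableFibers r) :
    partInfo μ (fun x => (p x, r x)) ≤ partInfo μ p + partInfo μ r := by
  have hpre : ∀ i j, (fun x => (p x, r x)) ⁻¹' {(i, j)} = p ⁻¹' {i} ∩ r ⁻¹' {j} := by
    intro i j; ext x; simp
  unfold partInfo
  rw [Fintype.sum_prod_type]
  simp only [hpre]
  set a : ι → ℝ := fun i => (μ (p ⁻¹' {i})).toReal with ha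
  set b : κ → ℝ := fun j => (μ (r ⁻¹' {j})).toReal with hb
  set c : ι → κ → ℝ := fun i j => (μ (p ⁻¹' {i} ∩ r ⁻¹' {j})).toReal with hc
  have hca : ∀ i, ∑ j, c i j = a i := fun i => sum_measure_fibers μ hr (p ⁻¹' {i})
  have hcb : ∀ j, ∑ i, c i j = b j := fun j => by
    have := sum_measure_fibers μ hp (r ⁻¹' {j})
    simpa only [Set.inter_comm] using this
  have ha1 : ∑ i, a i = 1 := by
    have := sum_measure_fibers μ hp Set.univ
    simpa using this
  have hb1 : ∑ j, b j = 1 := by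
    have := sum_measure_fibers μ hr Set.univ
    simpa using this
  calc ∑ i, ∑ j, Real.negMulLog (c i j)
      ≤ ∑ i, ∑ j, (-(c i j * Real.log (a i)) - c i j * Real.log (b j)
          + (a i * b j - c i j)) := by
        refine Finset.sum_le_sum fun i _ => Finset.sum_le_sum fun j _ => ?_
        refine negMulLog_le_of_le ENNReal.toReal_nonneg ?_ ?_
        · exact measureReal_mono Set.inter_subset_left
        · exact measureReal_mono Set.inter_subset_right
    _ = (∑ i, -(a i * Real.log (a i))) + (∑ j, -(b j * Real.log (b j)))
          + ((∑ i, a i) * (∑ j, b j) - ∑ i, a i) := by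
        simp only [Finset.sum_add_distrib, Finset.sum_sub_distrib, Finset.sum_neg_distrib]
        rw [Finset.sum_mul_sum]
        rw [Finset.sum_comm (f := fun i j => c i j * Real.log (b j))]
        simp only [← Finset.sum_mul, hca, hcb]
        ring
    _ = _ := by
        rw [ha1, hb1]
        simp [Real.negMulLog, a, b]

/-- A partition determined by two others has entropy at most the sum of theirs. -/
lemma partInfo_le_add (μ : Measure X) [IsProbabilityMeasure μ] {p : X → ι} {r : X → κ} {s : X → τ}
    (hp : MeasurableFibers p) (hr : MeasurableFibers r)
    (h : ∀ x y, p x = p y → r x = r y → s x = s y) :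
    partInfo μ s ≤ partInfo μ p + partInfo μ r :=
  (partInfo_le_of_determines μ (hp.prodMk hr) fun x y hxy =>
    h x y (congrArg Prod.fst hxy) (congrArg Prod.snd hxy)).trans (partInfo_prodMk_le μ hp hr)

lemma partInfo_const (μ : Measure X) [IsProbabilityMeasure μ] {p : X → ι}
    (h : ∀ x y, p x = p y) : partInfo μ p = 0 := by
  classical
  refine Finset.sum_eq_zero fun i _ => ?_
  by_cases hi : ∃ x, p x = i
  · obtain ⟨x, rfl⟩ := hi
    have : p ⁻¹' {p x} = Set.univ := by ext y; simp [h y x]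
    simp [this]
  · have : p ⁻¹' {i} = ∅ := by
      ext y; simpa using fun hy => hi ⟨y, hy⟩
    simp [this]

lemma partInfo_pi_le (μ : Measure X) [IsProbabilityMeasure μ] :
    ∀ {n : ℕ} {p : Fin n → X → ι}, (∀ k, MeasurableFibers (p k)) →
      partInfo μ (fun x k => p k x) ≤ ∑ k, partInfo μ (p k)
  | 0, p, _ => by
    rw [partInfo_const μ fun x y => Subsingleton.elim _ _]
    simp
  | n + 1, p, hp => by
    rw [Fin.sum_univ_succ]
    refine (partInfo_le_add μ (hp 0)
      (MeasurableFibers.pi (p := fun k : Fin n => p k.succ) fun k => hp k.succ) ?_).trans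
      (add_le_add_right (partInfo_pi_le μ fun k => hp k.succ) _)
    intro x y h0 h1
    funext k
    refine Fin.cases h0 (fun j => ?_) k
    exact congrFun h1 j

lemma partInfo_comp_measurePreserving {Y : Type*} [MeasurableSpace Y] {μ : Measure X}
    {ν : Measure Y} {g : X → Y} (hg : MeasurePreserving g μ ν) {p : Y → ι}
    (hp : MeasurableFibers p) : partInfo μ (fun x => p (g x)) = partInfo ν p := by
  unfold partInfo
  refine Finset.sum_congr rfl fun i _ => ?_
  rw [← hg.measure_preimage (hp i).nullMeasurableSet]
  rfl

lemma partInfo_nonneg (μ : Measure X) [IsProbabilityMeasure μ] (p : X → ι) :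
    0 ≤ partInfo μ p :=
  Finset.sum_nonneg fun _ _ => Real.negMulLog_nonneg ENNReal.toReal_nonneg measureReal_le_one

end Static

/-! ### Dynamical entropy and the Kolmogorov–Sinai theorem -/

section Dynamical

lemma refinePart_eq_iff {ι : Type} {f : X → X} {p : X → ι} {n : ℕ} {x y : X} :
    refinePart f p n x = refinePart f p n y ↔ ∀ k < n, p (f^[k] x) = p (f^[k] y) :=
  ⟨fun h k hk => congrFun h ⟨k, hk⟩, fun h => funext fun k => h k k.2⟩

variable [MeasurableSpace X] {ι κ : Type} {f : X → X} {p : X → ι} {μ : Measure X}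

lemma MeasurableFibers.refinePart (hp : MeasurableFibers p) (hf : Measurable f) (n : ℕ) :
    MeasurableFibers (refinePart f p n) :=
  MeasurableFibers.pi (p := fun (k : Fin n) x => p (f^[(k : ℕ)] x))
    fun _ => hp.comp_measurable (hf.iterate _)

variable [Fintype ι] [Fintype κ] [IsProbabilityMeasure μ]

lemma subadditive_partInfo_refinePart (hf : MeasurePreserving f μ μ) (hp : MeasurableFibers p) :
    Subadditive fun n => partInfo μ (refinePart f p n) := by
  intro m n
  beta_reduce
  have h := partInfo_comp_measurePreserving (hf.iterate m) (hp.refinePart hf.measurable n)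
  rw [← h]
  refine partInfo_le_add μ (hp.refinePart hf.measurable m)
    ((hp.refinePart hf.measurable n).comp_measurable (hf.measurable.iterate m)) ?_
  intro x y h1 h2
  rw [refinePart_eq_iff] at *
  intro k hk
  rcases lt_or_ge k m with hkm | hkm
  · exact h1 k hkm
  · have := h2 (k - m) (by omega)
    rwa [← Function.iterate_add_apply, ← Function.iterate_add_apply, Nat.sub_add_cancel hkm]
      at this

lemma bddBelow_partInfo_refinePart_div (μ : Measure X) [IsProbabilityMeasure μ] (f : X → X)
    (p : X → ι) :
    BddBelow (Set.range fun n : ℕ => partInfo μ (refinePart f p (n + 1)) / ((n : ℝ) + 1)) :=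
  ⟨0, by rintro _ ⟨n, rfl⟩; exact div_nonneg (partInfo_nonneg _ _) (by positivity)⟩

/-- Fekete's lemma identifies the infimum defining `entropyOfPart` with a limit. -/
lemma tendsto_entropyOfPart (hf : MeasurePreserving f μ μ) (hp : MeasurableFibers p) :
    Tendsto (fun n : ℕ => partInfo μ (refinePart f p n) / n) atTop
      (nhds (entropyOfPart μ f p)) := by
  have hsub := subadditive_partInfo_refinePart hf hp
  have hbdd : BddBelow (Set.range fun n : ℕ => partInfo μ (refinePart f p n) / n) :=
    ⟨0, by rintro _ ⟨n, rfl⟩; exact div_nonneg (partInfo_nonneg _ _) (by positivity)⟩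
  have hlim := hsub.tendsto_lim hbdd
  convert hlim using 2
  refine le_antisymm ?_ ?_
  · refine ge_of_tendsto ((tendsto_add_atTop_iff_nat 1).2 hlim) (Eventually.of_forall fun n => ?_)
    have := ciInf_le (bddBelow_partInfo_refinePart_div μ f p) n
    simpa [entropyOfPart] using this
  · refine le_ciInf fun n => ?_
    have := hsub.lim_le_div hbdd (n := n + 1) (by omega)
    simpa using this

lemma partInfo_refinePart_le (hf : MeasurePreserving f μ μ) (hp : MeasurableFibers p) (n : ℕ) :
    partInfo μ (refinePart f p n) ≤ n * partInfo μ p := by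
  refine (partInfo_pi_le μ (p := fun (k : Fin n) x => p (f^[(k : ℕ)] x))
    fun k => hp.comp_measurable (hf.measurable.iterate _)).trans_eq ?_
  simp [partInfo_comp_measurePreserving (hf.iterate _) hp]

/-- If `ξ ∘ f^N` is determined by `d ∘ f^N` together with the first `k` symbols of the
`p`-itinerary, then `d` bounds the entropy that `ξ` carries in excess of `p`. -/
lemma entropyOfPart_le_add {δ : Type} [Fintype δ] {ξ : X → κ} {d : X → δ}
    (hf : MeasurePreserving f μ μ) (hp : MeasurableFibers p) (hξ : MeasurableFibers ξ)
    (hd : MeasurableFibers d) (N k : ℕ)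
    (h : ∀ x y, refinePart f p k x = refinePart f p k y → d (f^[N] x) = d (f^[N] y) →
      ξ (f^[N] x) = ξ (f^[N] y)) :
    entropyOfPart μ f ξ ≤ entropyOfPart μ f p + partInfo μ d := by
  have hbound : ∀ n : ℕ, partInfo μ (refinePart f ξ n)
      ≤ partInfo μ (refinePart f p (n + k)) + n * partInfo μ d := by
    intro n
    rw [← partInfo_comp_measurePreserving (hf.iterate N) (hξ.refinePart hf.measurable n)]
    have h1 := partInfo_refinePart_le hf hd n
    rw [← partInfo_comp_measurePreserving (hf.iterate N) (hd.refinePart hf.measurable n)] at h1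
    refine (partInfo_le_add μ (hp.refinePart hf.measurable (n + k))
      ((hd.refinePart hf.measurable n).comp_measurable (hf.measurable.iterate N)) ?_).trans
      (by gcongr)
    intro x y hx hy
    rw [refinePart_eq_iff] at *
    intro j hj
    have hcomm : ∀ z : X, f^[j] (f^[N] z) = f^[N] (f^[j] z) := fun z => by
      rw [← Function.iterate_add_apply, ← Function.iterate_add_apply, add_comm]
    rw [hcomm, hcomm]
    refine h _ _ (refinePart_eq_iff.2 fun i hi => ?_) ?_
    · rw [← Function.iterate_add_apply, ← Function.iterate_add_apply]
      exact hx _ (by omega)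
    · rw [← hcomm, ← hcomm]
      exact hy j hj
  have hlim : Tendsto (fun n : ℕ => partInfo μ (refinePart f p (n + k)) / ((n + k : ℕ) : ℝ)
      * (((n + k : ℕ) : ℝ) / n) + partInfo μ d) atTop
      (nhds (entropyOfPart μ f p * 1 + partInfo μ d)) := by
    refine Tendsto.add_const _ (Tendsto.mul ?_ ?_)
    · exact (tendsto_add_atTop_iff_nat k).2 (tendsto_entropyOfPart hf hp)
    · have h1 : Tendsto (fun n : ℕ => 1 + (k : ℝ) / n) atTop (nhds (1 + 0)) :=
        tendsto_const_nhds.add (tendsto_const_div_atTop_nhds_zero_nat _)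
      rw [add_zero] at h1
      refine h1.congr' ?_
      filter_upwards [eventually_gt_atTop 0] with n hn
      have : (n : ℝ) ≠ 0 := by exact_mod_cast hn.ne'
      push_cast
      field_simp
  rw [mul_one] at hlim
  refine le_of_tendsto_of_tendsto (tendsto_entropyOfPart hf hξ) hlim ?_
  filter_upwards [eventually_gt_atTop 0] with n hn
  have hn' : (0 : ℝ) < n := by exact_mod_cast hn
  have hnk : ((n + k : ℕ) : ℝ) ≠ 0 := by positivity
  rw [div_mul_div_cancel₀ hnk, div_le_iff₀ hn', add_mul, div_mul_cancel₀ _ hn'.ne', mul_comm _ (n : ℝ)]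
  exact hbound n

end Dynamical

section KolmogorovSinai

variable {ι : Type}

variable [m₀ : MeasurableSpace X]

/-- The measurable sets `A` such that `f^{-M} A` depends only on the first `2M+1` symbols of the
`p`-itinerary. On a two-sided shift these are the sets depending on the coordinates in `[-M, M]`;
the same family serves for one-sided shifts. -/
def windowSets (f : X → X) (p : X → ι) (M : ℕ) : Set (Set X) :=
  {A | MeasurableSet A ∧ ∀ x y, refinePart f p (2 * M + 1) x = refinePart f p (2 * M + 1) y →
    (f^[M] x ∈ A ↔ f^[M] y ∈ A)}

lemma windowSets_mono (f : X → X) (p : X → ι) : Monotone (windowSets f p) := by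
  refine monotone_nat_of_le_succ fun M A hA => ⟨hA.1, fun x y hxy => ?_⟩
  rw [Function.iterate_succ_apply, Function.iterate_succ_apply]
  refine hA.2 _ _ ?_
  rw [refinePart_eq_iff] at *
  intro k hk
  exact hxy (k + 1) (by omega)

lemma isSetAlgebra_windowSets (f : X → X) (p : X → ι) :
    IsSetAlgebra (⋃ M, windowSets f p M) where
  empty_mem := Set.mem_iUnion.2 ⟨0, MeasurableSet.empty, fun x y _ => by simp⟩
  compl_mem s hs := by
    obtain ⟨M, hM⟩ := Set.mem_iUnion.1 hs
    exact Set.mem_iUnion.2 ⟨M, hM.1.compl, fun x y h => not_congr (hM.2 x y h)⟩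
  union_mem s t hs ht := by
    obtain ⟨M, hM⟩ := Set.mem_iUnion.1 hs
    obtain ⟨N, hN⟩ := Set.mem_iUnion.1 ht
    exact Set.mem_iUnion.2 ⟨max M N, hM.1.union hN.1, fun x y h => or_congr
      (windowSets_mono f p (le_max_left M N) hM |>.2 x y h)
      (windowSets_mono f p (le_max_right M N) hN |>.2 x y h)⟩

/-- The indicator partition of a set of small measure has small entropy. -/
lemma exists_partInfo_decide_le (μ : Measure X) [IsProbabilityMeasure μ] {ε : ℝ} (hε : 0 < ε) :
    ∃ δ > 0, ∀ D : Set X, MeasurableSet D → μ D < ENNReal.ofReal δ →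
      partInfo μ (fun x => (open Classical in decide (x ∈ D))) ≤ ε := by
  have hcont : Continuous fun t : ℝ => Real.negMulLog t + Real.negMulLog (1 - t) := by fun_prop
  have h0 := hcont.tendsto 0
  simp only [sub_zero, Real.negMulLog_zero, Real.negMulLog_one, add_zero] at h0
  obtain ⟨δ, hδ, hball⟩ := Metric.eventually_nhds_iff.1 (h0.eventually (gt_mem_nhds hε))
  refine ⟨δ, hδ, fun D hD hμ => ?_⟩
  have h1 : (μ D).toReal < δ := (ENNReal.lt_ofReal_iff_toReal_lt (measure_ne_top _ _)).1 hμ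
  have h2 : (μ Dᶜ).toReal = 1 - (μ D).toReal := probReal_compl_eq_one_sub hD
  have ht : (fun x => (open Classical in decide (x ∈ D))) ⁻¹' {true} = D := by ext x; simp
  have hf : (fun x => (open Classical in decide (x ∈ D))) ⁻¹' {false} = Dᶜ := by ext x; simp
  unfold partInfo
  rw [Fintype.sum_bool, ht, hf, h2]
  refine (hball ?_).le
  simpa [abs_of_nonneg ENNReal.toReal_nonneg] using h1

variable [Fintype ι] {f : X → X} {p : X → ι} {μ : Measure X} [IsProbabilityMeasure μ]

/-- A finite partition is, up to a partition of small entropy, visible in a finite window of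
the generator. -/
lemma entropyOfPart_le_of_generator (hf : MeasurePreserving f μ μ) (hp : MeasurableFibers p)
    (hgen : m₀ ≤ MeasurableSpace.generateFrom (⋃ M, windowSets f p M))
    {m : ℕ} {ξ : X → Fin m} (hξ : MeasurableFibers ξ) :
    entropyOfPart μ f ξ ≤ entropyOfPart μ f p := by
  classical
  refine le_of_forall_pos_le_add fun ε hε => ?_
  have hε' : 0 < ε / (m + 1) := by positivity
  obtain ⟨δ, hδ, hsmall⟩ := exists_partInfo_decide_le μ hε'
  have hdense := Measure.MeasureDense.of_generateFrom_isSetAlgebra_finite μ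
    (isSetAlgebra_windowSets f p) <| hgen.antisymm <|
      MeasurableSpace.generateFrom_le fun _ hs => (Set.mem_iUnion.1 hs).choose_spec.1
  choose A hA hAδ using fun i => hdense.approx (ξ ⁻¹' {i}) (hξ i) (measure_ne_top _ _) δ hδ
  choose M₀ hM₀ using fun i => Set.mem_iUnion.1 (hA i)
  set M := Finset.univ.sup M₀
  have hM : ∀ i, A i ∈ windowSets f p M := fun i =>
    windowSets_mono f p (Finset.le_sup (Finset.mem_univ i)) (hM₀ i)
  have hDm : ∀ i, MeasurableSet (symmDiff (ξ ⁻¹' {i}) (A i)) := fun i =>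
    (hξ i).symmDiff (hdense.measurable _ (hA i))
  -- `d` records, for each atom of `ξ`, whether the approximation by `A i` fails at the point.
  set d : X → Fin m → Bool := fun x i => decide (x ∈ symmDiff (ξ ⁻¹' {i}) (A i)) with hd
  have hdi : ∀ i, MeasurableFibers fun x => d x i := by
    rintro i (_ | _)
    · convert (hDm i).compl using 1
      ext x
      rw [Set.mem_preimage, Set.mem_singleton_iff, decide_eq_false_iff_not, Set.mem_compl_iff]
    · convert hDm i using 1
      ext x; simp [hd]
  have hle : partInfo μ d ≤ ε := by
    refine (partInfo_pi_le μ (p := fun i x => d x i) hdi).trans ?_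
    refine (Finset.sum_le_sum fun i _ => ?_ : _ ≤ ∑ _i : Fin m, ε / (m + 1)).trans ?_
    · convert hsmall _ (hDm i) (hAδ i)
    · rw [Finset.sum_const, Finset.card_univ, Fintype.card_fin, nsmul_eq_mul, mul_div_assoc',
        div_le_iff₀ (by positivity)]
      nlinarith
  refine (entropyOfPart_le_add hf hp hξ (MeasurableFibers.pi hdi) M (2 * M + 1) ?_).trans
    (add_le_add_right hle _)
  intro x y hxy hdxy
  have h1 := (hM (ξ (f^[M] x))).2 x y hxy
  have h2 := congrFun hdxy (ξ (f^[M] x))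
  simp only [hd, decide_eq_decide, Set.mem_symmDiff, Set.mem_preimage, Set.mem_singleton_iff]
    at h2
  by_contra hne
  have hne' : ¬ ξ (f^[M] y) = ξ (f^[M] x) := fun h => hne h.symm
  simp only [hne', true_and, false_and, not_false_eq_true, not_true_eq_false, and_false, and_true,
    or_false, false_or, h1] at h2
  tauto

/-- **Kolmogorov–Sinai theorem**: a generating partition realizes the entropy. In particular the
supremum defining `entropyKS` is attained, so it is not the junk value of an unbounded `sSup`. -/
lemma entropyKS_eq_of_generator {q : ℕ} {p : X → Fin q} (hf : MeasurePreserving f μ μ)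
    (hp : MeasurableFibers p)
    (hgen : m₀ ≤ MeasurableSpace.generateFrom (⋃ M, windowSets f p M)) :
    entropyKS μ f = entropyOfPart μ f p := by
  refine IsGreatest.csSup_eq ⟨⟨q, p, hp, rfl⟩, ?_⟩
  rintro _ ⟨m, ξ, hξ, rfl⟩
  exact entropyOfPart_le_of_generator hf hp hgen hξ

end KolmogorovSinai

/-! ### Shifts, projection and distances -/

section Shifts

lemma shiftSFT_iterate_apply (n : ℕ) (x : SigmaSFT q T) (i : ℤ) :
    (shiftSFT^[n] x).1 i = x.1 (i + n) := by
  induction n generalizing x with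
  | zero => simp
  | succ n ih =>
    rw [Function.iterate_succ_apply, ih]
    change x.1 (i + n + 1) = _
    push_cast
    rw [add_assoc]

lemma shiftPlus_iterate_apply (n : ℕ) (x : SigmaSFTPlus q T) (i : ℕ) :
    (shiftPlus^[n] x).1 i = x.1 (i + n) := by
  induction n generalizing x with
  | zero => simp
  | succ n ih => rw [Function.iterate_succ_apply, ih]; rfl

lemma shiftSFTInv_iterate_apply (n : ℕ) (x : SigmaSFT q T) (i : ℤ) :
    (shiftSFTInv^[n] x).1 i = x.1 (i - n) := by
  induction n generalizing x with
  | zero => simp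
  | succ n ih =>
    rw [Function.iterate_succ_apply, ih]
    change x.1 (i - n - 1) = _
    push_cast
    rw [sub_sub]

lemma projPlus_shiftSFT_iterate (n : ℕ) (x : SigmaSFT q T) :
    projPlus (shiftSFT^[n] x) = shiftPlus^[n] (projPlus x) := by
  refine Subtype.ext (funext fun i => ?_)
  rw [shiftPlus_iterate_apply]
  change (shiftSFT^[n] x).1 (i : ℤ) = x.1 ((i + n : ℕ) : ℤ)
  rw [shiftSFT_iterate_apply]
  push_cast
  rfl

lemma le_distSFTPlus_iff {ε : ℝ} (hε : 0 < ε) (x y : SigmaSFTPlus q T) :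
    ε ≤ distSFTPlus x y ↔ ∃ j : ℕ, ε ≤ (2 : ℝ) ^ (-(j : ℤ)) ∧ x.1 j ≠ y.1 j := by
  classical
  constructor
  · intro h
    unfold distSFTPlus at h
    split_ifs at h with hxy
    · linarith
    · exact ⟨_, h, Nat.find_spec (exists_disagree_plus hxy)⟩
  · rintro ⟨j, hj, hne⟩
    have hxy : x ≠ y := fun h => hne (by rw [h])
    refine hj.trans ?_
    unfold distSFTPlus
    rw [dif_neg hxy]
    refine zpow_le_zpow_right₀ one_le_two (neg_le_neg ?_)
    exact_mod_cast Nat.find_min' (exists_disagree_plus hxy) hne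

lemma le_distSFT_iff {ε : ℝ} (hε : 0 < ε) (x y : SigmaSFT q T) :
    ε ≤ distSFT x y ↔ ∃ j : ℕ, ε ≤ (2 : ℝ) ^ (-(j : ℤ)) ∧
      (x.1 (j : ℤ) ≠ y.1 (j : ℤ) ∨ x.1 (-(j : ℤ)) ≠ y.1 (-(j : ℤ))) := by
  classical
  constructor
  · intro h
    unfold distSFT at h
    split_ifs at h with hxy
    · linarith
    · exact ⟨_, h, Nat.find_spec (exists_disagree hxy)⟩
  · rintro ⟨j, hj, hne⟩
    have hxy : x ≠ y := by rintro rfl; simp at hne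
    refine hj.trans ?_
    unfold distSFT
    rw [dif_neg hxy]
    refine zpow_le_zpow_right₀ one_le_two (neg_le_neg ?_)
    exact_mod_cast Nat.find_min' (exists_disagree hxy) hne

lemma le_distSFTPlus_iterate_iff {ε : ℝ} (hε : 0 < ε) (k : ℕ) (x y : SigmaSFTPlus q T) :
    ε ≤ distSFTPlus (shiftPlus^[k] x) (shiftPlus^[k] y) ↔
      ∃ j : ℕ, ε ≤ (2 : ℝ) ^ (-(j : ℤ)) ∧ x.1 (j + k) ≠ y.1 (j + k) := by
  simp only [le_distSFTPlus_iff hε, shiftPlus_iterate_apply]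

lemma le_distSFT_iterate_iff {ε : ℝ} (hε : 0 < ε) (k : ℕ) (x y : SigmaSFT q T) :
    ε ≤ distSFT (shiftSFT^[k] x) (shiftSFT^[k] y) ↔
      ∃ j : ℕ, ε ≤ (2 : ℝ) ^ (-(j : ℤ)) ∧
        (x.1 (j + k) ≠ y.1 (j + k) ∨ x.1 (-j + k) ≠ y.1 (-j + k)) := by
  simp only [le_distSFT_iff hε, shiftSFT_iterate_apply]

/-- At a positive scale only finitely many coordinates are visible. -/
lemma exists_scale {ε : ℝ} (hε : 0 < ε) :
    ∃ m : ℕ, ∀ j : ℕ, ε ≤ (2 : ℝ) ^ (-(j : ℤ)) → j < m := by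
  obtain ⟨m, hm⟩ := exists_pow_lt_of_lt_one hε (by norm_num : (1 / 2 : ℝ) < 1)
  refine ⟨m, fun j hj => ?_⟩
  by_contra! hmj
  have h1 : (2 : ℝ) ^ (-(j : ℤ)) = (1 / 2) ^ j := by simp
  rw [h1] at hj
  have := pow_le_pow_of_le_one (by norm_num : (0 : ℝ) ≤ 1 / 2) (by norm_num) hmj
  linarith

/-- Primitivity provides a predecessor map on the alphabet. -/
lemma IsPrimitive.exists_pred (hT : IsPrimitive T) : ∃ pr : Fin q → Fin q, ∀ a, T (pr a) a = true := by
  obtain ⟨N, hN, h⟩ := hT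
  choose pr hpr using fun a : Fin q => show ∃ b, T b a = true by
    obtain ⟨w, -, hw, hadm⟩ := h a a
    refine ⟨w (N - 1), ?_⟩
    have := hadm (N - 1) (by omega)
    rwa [Nat.sub_add_cancel hN, hw] at this
  exact ⟨pr, hpr⟩

/-- The section of `π` that extends a one-sided sequence to the left by iterating a choice of
predecessors. -/
def leftExtend (pr : Fin q → Fin q) (hpr : ∀ a, T (pr a) a = true) (x : SigmaSFTPlus q T) :
    SigmaSFT q T :=
  ⟨fun i => if 0 ≤ i then x.1 i.toNat else pr^[(-i).toNat] (x.1 0), fun i => by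
    beta_reduce
    rcases lt_trichotomy i (-1) with hi | rfl | hi
    · have h1 : (-i).toNat = (-(i + 1)).toNat + 1 := by omega
      rw [if_neg (by omega), if_neg (by omega), h1, Function.iterate_succ_apply']
      exact hpr _
    · simpa using hpr _
    · have h1 : (i + 1).toNat = i.toNat + 1 := by omega
      rw [if_pos (by omega), if_pos (by omega), h1]
      exact x.2 _⟩

lemma projPlus_leftExtend (pr : Fin q → Fin q) (hpr : ∀ a, T (pr a) a = true)
    (x : SigmaSFTPlus q T) : projPlus (leftExtend pr hpr x) = x := by
  refine Subtype.ext (funext fun i => ?_)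
  simp [projPlus, leftExtend]

end Shifts

/-! ### Equality of the pressures -/

section Pressure

/-- Real sequences whose difference tends to `0` have the same `limsup`, junk values at
unbounded sequences included. -/
lemma limsup_eq_of_le_of_sub_tendsto {u v : ℕ → ℝ} (huv : ∀ n, u n ≤ v n) {e : ℕ → ℝ}
    (hvu : ∀ n, v n ≤ u n + e n) (he : Tendsto e atTop (nhds 0)) :
    atTop.limsup u = atTop.limsup v := by
  rw [limsup_eq, limsup_eq]
  set U := {a | ∀ᶠ n in atTop, u n ≤ a}
  set V := {a | ∀ᶠ n in atTop, v n ≤ a}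
  have hVU : V ⊆ U := fun a ha => ha.mono fun n hn => (huv n).trans hn
  have hUV : ∀ a ∈ U, ∀ δ > 0, a + δ ∈ V := fun a ha δ hδ => by
    filter_upwards [ha, he.eventually (gt_mem_nhds hδ)] with n h1 h2
    linarith [hvu n]
  rcases U.eq_empty_or_nonempty with hU | hU
  · have hV : V = ∅ := Set.subset_empty_iff.1 (hU ▸ hVU)
    rw [hU, hV]
  have hV : V.Nonempty := hU.elim fun a ha => ⟨_, hUV a ha 1 one_pos⟩
  by_cases hb : BddBelow V
  · have hbU : BddBelow U := by
      obtain ⟨b, hb⟩ := hb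
      refine ⟨b - 1, fun a ha => ?_⟩
      linarith [hb (hUV a ha 1 one_pos)]
    refine le_antisymm (csInf_le_csInf hbU hV hVU) (le_csInf hU fun a ha => ?_)
    exact le_of_forall_pos_le_add fun δ hδ => csInf_le hb (hUV a ha δ hδ)
  · rw [Real.sInf_of_not_bddBelow hb, Real.sInf_of_not_bddBelow fun h => hb (h.mono hVU)]

instance compactSpace_sigmaSFTPlus : CompactSpace (SigmaSFTPlus q T) := by
  refine isCompact_iff_compactSpace.1 (IsClosed.isCompact ?_)
  change IsClosed {x : ℕ → Fin q | ∀ i, T (x i) (x (i + 1)) = true}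
  rw [Set.ofPred_forall]
  refine isClosed_iInter fun i => ?_
  have h : Continuous fun x : ℕ → Fin q => (x i, x (i + 1)) := by fun_prop
  exact isClosed_eq ((continuous_of_discreteTopology
    (f := fun p : Fin q × Fin q => T p.1 p.2)).comp h) continuous_const

instance compactSpace_sigmaSFT : CompactSpace (SigmaSFT q T) := by
  refine isCompact_iff_compactSpace.1 (IsClosed.isCompact ?_)
  change IsClosed {x : ℤ → Fin q | ∀ i, T (x i) (x (i + 1)) = true}
  rw [Set.ofPred_forall]
  refine isClosed_iInter fun i => ?_
  have h : Continuous fun x : ℤ → Fin q => (x i, x (i + 1)) := by fun_prop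
  exact isClosed_eq ((continuous_of_discreteTopology
    (f := fun p : Fin q × Fin q => T p.1 p.2)).comp h) continuous_const

/-- The sums `∑_{x ∈ E} φ_n x` over all `(n,ε)`-separated sets `E`. -/
def separatedSums (ρ : X → X → ℝ) (f : X → X) (φ : ℕ → X → ℝ) (n : ℕ) (ε : ℝ) : Set ℝ :=
  (fun E : Finset X => ∑ x ∈ E, φ n x) '' {E : Finset X | IsSeparatedSet ρ f n ε E}

variable {φ : ℕ → SigmaSFTPlus q T → ℝ}

lemma bddAbove_separatedSums (hc : ∀ n, Continuous (φ n)) {ε : ℝ}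
    (hε : 0 < ε) (n : ℕ) : BddAbove (separatedSums distSFTPlus shiftPlus φ n ε) := by
  classical
  obtain ⟨m, hm⟩ := exists_scale hε
  obtain ⟨B, hB⟩ := (isCompact_range (hc n)).bddAbove
  refine ⟨Fintype.card (Fin (n + m) → Fin q) * max B 0, ?_⟩
  rintro _ ⟨E, hE, rfl⟩
  have hcard : E.card ≤ Fintype.card (Fin (n + m) → Fin q) := by
    refine Finset.card_le_card_of_injOn (t := Finset.univ)
      (fun x (k : Fin (n + m)) => x.1 k) (fun _ _ => Finset.mem_coe.2 (Finset.mem_univ _)) ?_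
    intro x hx y hy hxy
    by_contra hne
    obtain ⟨k, hk, hd⟩ := hE x hx y hy hne
    obtain ⟨j, hj, hjk⟩ := (le_distSFTPlus_iterate_iff hε k x y).1 hd
    exact hjk (congrFun hxy ⟨j + k, by have := hm j hj; omega⟩)
  calc ∑ x ∈ E, φ n x ≤ E.card • max B 0 :=
        Finset.sum_le_card_nsmul _ _ _ fun x _ => (hB ⟨x, rfl⟩).trans (le_max_left _ _)
    _ = E.card * max B 0 := nsmul_eq_mul _ _
    _ ≤ _ := by gcongr

lemma separatedSums_subset (hs : Function.Surjective (projPlus : SigmaSFT q T → _)) {ε : ℝ}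
    (hε : 0 < ε) (n : ℕ) :
    separatedSums distSFTPlus shiftPlus φ n ε ⊆
      separatedSums distSFT shiftSFT (fun n x => φ n (projPlus x)) n ε := by
  classical
  rintro _ ⟨E, hE, rfl⟩
  obtain ⟨s, hs⟩ := hs.hasRightInverse
  refine ⟨E.image s, ?_, ?_⟩
  · intro x hx y hy hxy
    obtain ⟨x, hx', rfl⟩ := Finset.mem_image.1 hx
    obtain ⟨y, hy', rfl⟩ := Finset.mem_image.1 hy
    obtain ⟨k, hk, hd⟩ := hE x hx' y hy' fun h => hxy (by rw [h])
    refine ⟨k, hk, ?_⟩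
    obtain ⟨j, hj, hjk⟩ := (le_distSFTPlus_iterate_iff hε k x y).1 hd
    refine (le_distSFT_iterate_iff hε k _ _).2 ⟨j, hj, Or.inl ?_⟩
    rw [← hs x, ← hs y] at hjk
    exact_mod_cast hjk
  · change ∑ x ∈ E.image s, φ n (projPlus x) = ∑ x ∈ E, φ n x
    rw [Finset.sum_image fun x _ y _ h => hs.injective h]
    simp [hs _]

/-- A two-sided separated set splits into at most `q ^ m` classes according to the `m` coordinates
before time `0`; within a class `π` is injective and preserves separation. -/
lemma separatedSums_le (hc : ∀ n, Continuous (φ n)) {ε : ℝ}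
    (hε : 0 < ε) {m : ℕ} (hm : ∀ j : ℕ, ε ≤ (2 : ℝ) ^ (-(j : ℤ)) → j < m) (n : ℕ) :
    ∀ s ∈ separatedSums distSFT shiftSFT (fun n x => φ n (projPlus x)) n ε,
      s ≤ (q : ℝ) ^ m * sSup (separatedSums distSFTPlus shiftPlus φ n ε) := by
  classical
  rintro _ ⟨E, hE, rfl⟩
  let past : SigmaSFT q T → Fin m → Fin q := fun x k => x.1 (-((k : ℕ) : ℤ) - 1)
  have hsep : ∀ x ∈ E, ∀ y ∈ E, past x = past y → x ≠ y → ∃ k < n,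
      ε ≤ distSFTPlus (shiftPlus^[k] (projPlus x)) (shiftPlus^[k] (projPlus y)) := by
    intro x hx y hy hp hxy
    obtain ⟨k, hk, hd⟩ := hE x hx y hy hxy
    obtain ⟨j, hj, hjk | hjk⟩ := (le_distSFT_iterate_iff hε k x y).1 hd
    · refine ⟨k, hk, (le_distSFTPlus_iterate_iff hε k _ _).2 ⟨j, hj, ?_⟩⟩
      change x.1 ((j + k : ℕ) : ℤ) ≠ y.1 ((j + k : ℕ) : ℤ)
      exact_mod_cast hjk
    · have hjm := hm j hj
      rcases lt_or_ge k j with hkj | hkj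
      · refine absurd (congrFun hp ⟨j - k - 1, by omega⟩) ?_
        have : (-((j - k - 1 : ℕ) : ℤ) - 1) = -(j : ℤ) + k := by omega
        simpa only [past, this] using hjk
      · refine ⟨k - j, by omega, (le_distSFTPlus_iterate_iff hε _ _ _).2 ⟨0, ?_, ?_⟩⟩
        · refine hj.trans (zpow_le_zpow_right₀ one_le_two ?_)
          simp
        · change x.1 ((0 + (k - j) : ℕ) : ℤ) ≠ y.1 ((0 + (k - j) : ℕ) : ℤ)
          have : ((0 + (k - j) : ℕ) : ℤ) = -(j : ℤ) + k := by omega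
          rwa [this]
  change ∑ x ∈ E, φ n (projPlus x) ≤ _
  rw [← Finset.sum_fiberwise (s := E) (g := past)]
  have hcardq : (q : ℝ) ^ m = (Finset.univ : Finset (Fin m → Fin q)).card := by simp
  rw [hcardq, ← nsmul_eq_mul]
  refine Finset.sum_le_card_nsmul _ _ _ fun w _ => ?_
  refine le_csSup (bddAbove_separatedSums hc hε n)
    ⟨(E.filter fun x => past x = w).image projPlus, ?_, ?_⟩
  · intro x hx y hy hxy
    obtain ⟨x, hx', rfl⟩ := Finset.mem_image.1 hx
    obtain ⟨y, hy', rfl⟩ := Finset.mem_image.1 hy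
    rw [Finset.mem_filter] at hx' hy'
    exact hsep x hx'.1 y hy'.1 (hx'.2.trans hy'.2.symm) fun h => hxy (by rw [h])
  · refine Finset.sum_image fun x hx y hy h => ?_
    simp only [Finset.coe_filter, Set.mem_ofPred_eq] at hx hy
    by_contra hne
    obtain ⟨k, -, hd⟩ := hsep x hx.1 y hy.1 (hx.2.trans hy.2.symm) hne
    obtain ⟨j, -, hjk⟩ := (le_distSFTPlus_iterate_iff hε k _ _).1 hd
    exact hjk (by rw [h])

/-- The two pressures agree scale by scale: the separated sums differ at most by a factor
independent of `n`. -/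
lemma pressure_eq [Nonempty (SigmaSFTPlus q T)]
    (hs : Function.Surjective (projPlus : SigmaSFT q T → _))
    (hc : ∀ n, Continuous (φ n)) (hpos : ∀ n x, 0 < φ n x) :
    pressure distSFT shiftSFT (fun n x => φ n (projPlus x))
      = pressure distSFTPlus shiftPlus φ := by
  obtain ⟨x₀⟩ := ‹Nonempty (SigmaSFTPlus q T)›
  have hq : (0 : ℝ) < q := by exact_mod_cast (x₀.1 0).pos
  suffices h : ∀ ε > 0, atTop.limsup (fun n : ℕ => Real.log
      (sSup (separatedSums distSFTPlus shiftPlus φ n ε)) / n) = atTop.limsup (fun n : ℕ => Real.log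
      (sSup (separatedSums distSFT shiftSFT (fun n x => φ n (projPlus x)) n ε)) / n) by
    unfold pressure
    congr 1
    ext p
    refine exists_congr fun ε => and_congr_right fun hε => ?_
    have := h ε hε
    unfold separatedSums at this
    rw [this]
  intro ε hε
  obtain ⟨m, hm⟩ := exists_scale hε
  have hmem : ∀ n, φ n x₀ ∈ separatedSums distSFTPlus shiftPlus φ n ε := fun n => by
    refine ⟨{x₀}, ?_, by simp⟩
    intro x hx y hy hxy
    rw [Finset.mem_singleton] at hx hy
    exact absurd (hx.trans hy.symm) hxy
  have h1pos : ∀ n, 0 < sSup (separatedSums distSFTPlus shiftPlus φ n ε) := fun n =>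
    (hpos n x₀).trans_le (le_csSup (bddAbove_separatedSums hc hε n) (hmem n))
  have h12 : ∀ n, sSup (separatedSums distSFTPlus shiftPlus φ n ε)
      ≤ sSup (separatedSums distSFT shiftSFT (fun n x => φ n (projPlus x)) n ε) := fun n =>
    csSup_le_csSup ⟨_, separatedSums_le hc hε hm n⟩ ⟨_, hmem n⟩
      (separatedSums_subset hs hε n)
  have h21 : ∀ n, sSup (separatedSums distSFT shiftSFT (fun n x => φ n (projPlus x)) n ε)
      ≤ (q : ℝ) ^ m * sSup (separatedSums distSFTPlus shiftPlus φ n ε) := fun n =>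
    csSup_le ⟨_, separatedSums_subset hs hε n (hmem n)⟩ (separatedSums_le hc hε hm n)
  refine limsup_eq_of_le_of_sub_tendsto (e := fun n : ℕ => Real.log ((q : ℝ) ^ m) / n)
    (fun n => ?_) (fun n => ?_) (tendsto_const_div_atTop_nhds_zero_nat _)
  · exact div_le_div_of_nonneg_right (Real.log_le_log (h1pos n) (h12 n)) n.cast_nonneg
  · rw [← add_div]
    refine div_le_div_of_nonneg_right ?_ n.cast_nonneg
    rw [add_comm, ← Real.log_mul (by positivity) (h1pos n).ne']
    exact Real.log_le_log ((h1pos n).trans_le (h12 n)) (h21 n)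

end Pressure

/-! ### The natural extension of an invariant measure -/

section NaturalExtension

instance secondCountable_sigmaSFTPlus : SecondCountableTopology (SigmaSFTPlus q T) :=
  TopologicalSpace.Subtype.secondCountableTopology _

instance secondCountable_sigmaSFT : SecondCountableTopology (SigmaSFT q T) :=
  TopologicalSpace.Subtype.secondCountableTopology _

instance metrizable_sigmaSFTPlus : TopologicalSpace.MetrizableSpace (SigmaSFTPlus q T) :=
  TopologicalSpace.metrizableSpace_of_t3_secondCountable _

instance metrizable_sigmaSFT : TopologicalSpace.MetrizableSpace (SigmaSFT q T) :=
  TopologicalSpace.metrizableSpace_of_t3_secondCountable _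

instance borelSpace_sigmaSFTPlus : BorelSpace (SigmaSFTPlus q T) := Subtype.borelSpace _

instance borelSpace_sigmaSFT : BorelSpace (SigmaSFT q T) := Subtype.borelSpace _

lemma continuous_shiftSFT : Continuous (shiftSFT : SigmaSFT q T → SigmaSFT q T) :=
  continuous_induced_rng.2 <| show Continuous fun (x : SigmaSFT q T) (i : ℤ) => x.1 (i + 1) from
    continuous_pi fun i => (continuous_apply (i + 1)).comp continuous_subtype_val

lemma continuous_shiftSFTInv : Continuous (shiftSFTInv : SigmaSFT q T → SigmaSFT q T) :=
  continuous_induced_rng.2 <| show Continuous fun (x : SigmaSFT q T) (i : ℤ) => x.1 (i - 1) from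
    continuous_pi fun i => (continuous_apply (i - 1)).comp continuous_subtype_val

lemma continuous_shiftPlus : Continuous (shiftPlus : SigmaSFTPlus q T → SigmaSFTPlus q T) :=
  continuous_induced_rng.2 <| show Continuous fun (x : SigmaSFTPlus q T) (i : ℕ) => x.1 (i + 1) from
    continuous_pi fun i => (continuous_apply (i + 1)).comp continuous_subtype_val

lemma continuous_projPlus : Continuous (projPlus : SigmaSFT q T → SigmaSFTPlus q T) :=
  continuous_induced_rng.2 <| show Continuous fun (x : SigmaSFT q T) (i : ℕ) => x.1 (i : ℤ) from
    continuous_pi fun i => (continuous_apply (i : ℤ)).comp continuous_subtype_val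

lemma measurable_leftExtend (pr : Fin q → Fin q) (hpr : ∀ a, T (pr a) a = true) :
    Measurable (leftExtend (T := T) pr hpr) := by
  refine Measurable.subtype_mk (measurable_pi_lambda _ fun i => ?_)
  by_cases hi : 0 ≤ i
  · simp only [hi, if_true]
    exact (measurable_pi_apply _).comp measurable_subtype_coe
  · simp only [hi, if_false]
    exact (measurable_of_finite _).comp ((measurable_pi_apply 0).comp measurable_subtype_coe)

lemma sigmaSFT_measurableSpace_le {m : MeasurableSpace (SigmaSFT q T)}
    (h : ∀ (i : ℤ) (a : Fin q), MeasurableSet[m] {x | x.1 i = a}) :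
    (Subtype.instMeasurableSpace : MeasurableSpace (SigmaSFT q T)) ≤ m := by
  have : @Measurable _ _ m _ (Subtype.val : SigmaSFT q T → ℤ → Fin q) :=
    @measurable_pi_lambda _ _ _ m _ _ fun i => @measurable_to_countable' _ _ _ _ m _ fun a => h i a
  exact this.comap_le

lemma sigmaSFTPlus_measurableSpace_le {m : MeasurableSpace (SigmaSFTPlus q T)}
    (h : ∀ (i : ℕ) (a : Fin q), MeasurableSet[m] {x | x.1 i = a}) :
    (Subtype.instMeasurableSpace : MeasurableSpace (SigmaSFTPlus q T)) ≤ m := by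
  have : @Measurable _ _ m _ (Subtype.val : SigmaSFTPlus q T → ℕ → Fin q) :=
    @measurable_pi_lambda _ _ _ m _ _ fun i => @measurable_to_countable' _ _ _ _ m _ fun a => h i a
  exact this.comap_le

/-- The factor map `x ↦ (x_i)_{i ≥ -N}`, reindexed to start at `0`. -/
def projFrom (N : ℕ) (x : SigmaSFT q T) : SigmaSFTPlus q T :=
  projPlus (shiftSFTInv^[N] x)

lemma continuous_projFrom (N : ℕ) : Continuous (projFrom (T := T) N) :=
  continuous_projPlus.comp (continuous_shiftSFTInv.iterate N)

lemma projFrom_apply (N : ℕ) (x : SigmaSFT q T) (i : ℕ) :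
    (projFrom N x).1 i = x.1 (i - N) :=
  shiftSFTInv_iterate_apply N x i

lemma projFrom_shiftSFT_iterate {N n : ℕ} (h : N ≤ n) (x : SigmaSFT q T) :
    projFrom N (shiftSFT^[n] x) = shiftPlus^[n - N] (projPlus x) := by
  refine Subtype.ext (funext fun i => ?_)
  rw [projFrom_apply, shiftSFT_iterate_apply, shiftPlus_iterate_apply]
  change _ = x.1 ((i + (n - N) : ℕ) : ℤ)
  refine congrArg x.1 ?_
  omega

lemma shiftPlus_iterate_projFrom_add (N k : ℕ) (x : SigmaSFT q T) :
    shiftPlus^[k] (projFrom (N + k) x) = projFrom N x := by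
  refine Subtype.ext (funext fun i => ?_)
  rw [projFrom_apply, shiftPlus_iterate_apply, projFrom_apply]
  refine congrArg x.1 ?_
  push_cast
  ring

/-- Measures on `Σ_T` are determined by their images under all the maps `projFrom N`. -/
lemma measure_ext_projFrom {ν ν' : Measure (SigmaSFT q T)} [IsProbabilityMeasure ν]
    [IsProbabilityMeasure ν'] (h : ∀ N, ν.map (projFrom N) = ν'.map (projFrom N)) : ν = ν' := by
  refine ext_of_generate_finite
    {S | ∃ (N : ℕ) (A : Set (SigmaSFTPlus q T)), MeasurableSet A ∧ S = projFrom N ⁻¹' A}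
    (le_antisymm (sigmaSFT_measurableSpace_le fun i a => ?_) ?_) ?_ ?_ (by simp)
  · refine MeasurableSpace.measurableSet_generateFrom
      ⟨i.natAbs, {y | y.1 (i + i.natAbs).toNat = a}, ?_, ?_⟩
    · exact ((measurable_pi_apply (i + i.natAbs).toNat).comp measurable_subtype_coe :
        Measurable fun y : SigmaSFTPlus q T => y.1 (i + i.natAbs).toNat) (measurableSet_singleton a)
    · ext x
      have : (((i + i.natAbs).toNat : ℕ) : ℤ) - i.natAbs = i := by omega
      simp only [Set.mem_ofPred_eq, Set.mem_preimage, projFrom_apply, this]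
  · refine MeasurableSpace.generateFrom_le ?_
    rintro _ ⟨N, A, hA, rfl⟩
    exact (continuous_projFrom N).measurable hA
  · rintro _ ⟨N, A, hA, rfl⟩ _ ⟨M, B, hB, rfl⟩ -
    refine ⟨N + M, (shiftPlus^[M] ⁻¹' A) ∩ (shiftPlus^[N] ⁻¹' B),
      (((continuous_shiftPlus.iterate M).measurable hA).inter
        ((continuous_shiftPlus.iterate N).measurable hB)), ?_⟩
    ext x
    simp only [Set.mem_inter_iff, Set.mem_preimage]
    rw [shiftPlus_iterate_projFrom_add, add_comm N M, shiftPlus_iterate_projFrom_add]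
  · rintro _ ⟨N, A, hA, rfl⟩
    rw [← Measure.map_apply (continuous_projFrom N).measurable hA, h N,
      Measure.map_apply (continuous_projFrom N).measurable hA]

/-- By invariance every `projFrom N` has the same image measure as `π`. -/
lemma map_projFrom {ν : Measure (SigmaSFT q T)} (hν : MeasurePreserving shiftSFT ν ν) (N : ℕ) :
    ν.map (projFrom N) = ν.map projPlus := by
  conv_lhs => rw [← (hν.iterate N).map_eq]
  rw [Measure.map_map (continuous_projFrom N).measurable
    (continuous_shiftSFT.iterate N).measurable]
  congr 1
  funext x
  simp [projFrom_shiftSFT_iterate le_rfl]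

lemma measurePreserving_shiftPlus_map {ν : Measure (SigmaSFT q T)}
    (hν : MeasurePreserving shiftSFT ν ν) :
    MeasurePreserving shiftPlus (ν.map projPlus) (ν.map projPlus) := by
  refine ⟨continuous_shiftPlus.measurable, ?_⟩
  rw [Measure.map_map continuous_shiftPlus.measurable continuous_projPlus.measurable]
  have : (shiftPlus ∘ projPlus : SigmaSFT q T → SigmaSFTPlus q T) = projPlus ∘ shiftSFT :=
    funext fun x => (projPlus_shiftSFT_iterate 1 x).symm
  rw [this, ← Measure.map_map continuous_projPlus.measurable continuous_shiftSFT.measurable,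
    hν.map_eq]

/-- Existence of the natural extension: a weak limit of the measures `σ^n_* s_* μ`, where `s` is
the section `leftExtend`. The image of the `n`-th measure under `projFrom N` is `μ` as soon as
`n ≥ N`, and this survives in the limit. -/
lemma exists_naturalExtension (hT : IsPrimitive T) {μ : Measure (SigmaSFTPlus q T)}
    [IsProbabilityMeasure μ] (hμ : MeasurePreserving shiftPlus μ μ) :
    ∃ ν : Measure (SigmaSFT q T), IsProbabilityMeasure ν ∧ MeasurePreserving shiftSFT ν ν ∧
      ν.map projPlus = μ := by
  obtain ⟨pr, hpr⟩ := hT.exists_pred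
  have hmeas : ∀ n, Measurable fun x => shiftSFT^[n] (leftExtend (T := T) pr hpr x) := fun n =>
    (continuous_shiftSFT.iterate n).measurable.comp (measurable_leftExtend pr hpr)
  let νs : ℕ → ProbabilityMeasure (SigmaSFT q T) := fun n =>
    ⟨μ.map fun x => shiftSFT^[n] (leftExtend pr hpr x),
      Measure.isProbabilityMeasure_map (hmeas n).aemeasurable⟩
  set ν : ProbabilityMeasure (SigmaSFT q T) := ((hyperfilter ℕ).map νs).lim
  have hlim : Tendsto νs (hyperfilter ℕ : Filter ℕ) (nhds ν) :=
    ((hyperfilter ℕ).map νs).le_nhds_lim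
  have hproj : ∀ N, (ν : Measure (SigmaSFT q T)).map (projFrom N) = μ := by
    intro N
    have hc := (ProbabilityMeasure.continuous_map (continuous_projFrom (T := T) N)).tendsto ν
    have hconst : Tendsto (fun n => (νs n).map (continuous_projFrom N).measurable.aemeasurable)
        (hyperfilter ℕ : Filter ℕ) (nhds (⟨μ, inferInstance⟩ : ProbabilityMeasure (SigmaSFTPlus q T))) := by
      refine tendsto_const_nhds.congr' ?_
      filter_upwards [Nat.hyperfilter_le_atTop (eventually_ge_atTop N)] with n hn
      refine Subtype.ext ?_
      change μ = (μ.map fun x => shiftSFT^[n] (leftExtend pr hpr x)).map (projFrom N)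
      rw [Measure.map_map (continuous_projFrom N).measurable (hmeas n)]
      have : (projFrom N ∘ fun x => shiftSFT^[n] (leftExtend (T := T) pr hpr x))
          = shiftPlus^[n - N] := by
        funext x
        simp [projFrom_shiftSFT_iterate hn, projPlus_leftExtend]
      rw [this, (hμ.iterate _).map_eq]
    exact congrArg (fun ρ : ProbabilityMeasure (SigmaSFTPlus q T) => (ρ : Measure (SigmaSFTPlus q T)))
      (tendsto_nhds_unique (hc.comp hlim) hconst)
  have hproj0 : (ν : Measure (SigmaSFT q T)).map projPlus = μ := hproj 0
  refine ⟨ν, inferInstance, ⟨continuous_shiftSFT.measurable, ?_⟩, hproj0⟩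
  have : IsProbabilityMeasure ((ν : Measure (SigmaSFT q T)).map shiftSFT) :=
    Measure.isProbabilityMeasure_map continuous_shiftSFT.measurable.aemeasurable
  refine measure_ext_projFrom fun N => ?_
  rw [Measure.map_map (continuous_projFrom N).measurable continuous_shiftSFT.measurable, hproj N]
  rcases N with _ | N
  · have : (projFrom 0 ∘ shiftSFT : SigmaSFT q T → _) = shiftPlus ∘ projPlus :=
      funext fun x => projPlus_shiftSFT_iterate 1 x
    rw [this, ← Measure.map_map continuous_shiftPlus.measurable continuous_projPlus.measurable,
      hproj0, hμ.map_eq]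
  · have : (projFrom (N + 1) ∘ shiftSFT : SigmaSFT q T → _) = projFrom N := by
      funext x
      refine Subtype.ext (funext fun i => ?_)
      rw [Function.comp_apply, projFrom_apply, projFrom_apply]
      change x.1 _ = _
      refine congrArg x.1 ?_
      push_cast
      ring
    rw [this, hproj N]

end NaturalExtension

/-! ### Entropy and equilibrium states under the projection -/

section Comparison

/-- A measure and its projection have the same entropy, since the partition into the `0`-th symbol
generates both systems. -/
lemma entropyKS_eq_map {ν : Measure (SigmaSFT q T)} [IsProbabilityMeasure ν]
    (hν : MeasurePreserving shiftSFT ν ν) :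
    entropyKS ν shiftSFT = entropyKS (ν.map projPlus) shiftPlus := by
  have hμ := measurePreserving_shiftPlus_map hν
  have hprob : IsProbabilityMeasure (ν.map projPlus) :=
    Measure.isProbabilityMeasure_map continuous_projPlus.measurable.aemeasurable
  have hcoord : ∀ (i : ℤ) (a : Fin q), MeasurableSet {x : SigmaSFT q T | x.1 i = a} :=
    fun i a => ((measurable_pi_apply i).comp measurable_subtype_coe :
      Measurable fun x : SigmaSFT q T => x.1 i) (measurableSet_singleton a)
  have hcoordPlus : ∀ (i : ℕ) (a : Fin q), MeasurableSet {x : SigmaSFTPlus q T | x.1 i = a} :=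
    fun i a => ((measurable_pi_apply i).comp measurable_subtype_coe :
      Measurable fun x : SigmaSFTPlus q T => x.1 i) (measurableSet_singleton a)
  have hp : MeasurableFibers fun x : SigmaSFT q T => x.1 0 := hcoord 0
  have hpPlus : MeasurableFibers fun x : SigmaSFTPlus q T => x.1 0 := hcoordPlus 0
  rw [entropyKS_eq_of_generator hν hp, entropyKS_eq_of_generator hμ hpPlus]
  · unfold entropyOfPart
    congr 1
    funext n
    have hg : MeasurePreserving projPlus ν (ν.map projPlus) :=
      ⟨continuous_projPlus.measurable, rfl⟩
    rw [← partInfo_comp_measurePreserving hg (hpPlus.refinePart hμ.measurable _)]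
    congr 2
    funext x k
    simp only [refinePart, ← projPlus_shiftSFT_iterate]
    rfl
  · refine sigmaSFTPlus_measurableSpace_le fun i a =>
      MeasurableSpace.measurableSet_generateFrom
        (Set.mem_iUnion.2 ⟨i, hcoordPlus i a, fun x y hxy => ?_⟩)
    -- Coordinate `i` of `σ^i x` is coordinate `2 * i` of `x`, the last one in the window.
    have := refinePart_eq_iff.1 hxy (i + i) (by omega)
    simp only [shiftPlus_iterate_apply, zero_add] at this
    simp only [Set.mem_ofPred_eq, shiftPlus_iterate_apply, this]
  · refine sigmaSFT_measurableSpace_le fun i a =>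
      MeasurableSpace.measurableSet_generateFrom
        (Set.mem_iUnion.2 ⟨i.natAbs, hcoord i a, fun x y hxy => ?_⟩)
    have := refinePart_eq_iff.1 hxy (i + i.natAbs).toNat (by omega)
    have hi : (((i + i.natAbs).toNat : ℕ) : ℤ) = i + i.natAbs := by omega
    simp only [shiftSFT_iterate_apply, zero_add, hi] at this
    simp only [Set.mem_ofPred_eq, shiftSFT_iterate_apply, this]

/-- An invariant measure is an equilibrium state of `Φ ∘ π` exactly when its projection is one
of `Φ`: entropy, Lyapunov exponent and pressure all agree. -/
lemma isEqState_iff_map (hT : IsPrimitive T) {φ : ℕ → SigmaSFTPlus q T → ℝ}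
    (hφ : IsSubadditivePotential shiftPlus φ) {ν : Measure (SigmaSFT q T)}
    [IsProbabilityMeasure ν] (hν : MeasurePreserving shiftSFT ν ν) :
    IsEqState distSFT shiftSFT (fun n x => φ n (projPlus x)) ν ↔
      IsEqState distSFTPlus shiftPlus φ (ν.map projPlus) := by
  obtain ⟨hc, hpos, -⟩ := hφ
  obtain ⟨pr, hpr⟩ := hT.exists_pred
  have hprob : IsProbabilityMeasure (ν.map projPlus) :=
    Measure.isProbabilityMeasure_map continuous_projPlus.measurable.aemeasurable
  have hne : Nonempty (SigmaSFTPlus q T) := (ν.map projPlus).nonempty_of_neZero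
  have hlog : ∀ n, ∫ x, Real.log (φ n x) ∂(ν.map projPlus)
      = ∫ x, Real.log (φ n (projPlus x)) ∂ν := fun n =>
    integral_map continuous_projPlus.measurable.aemeasurable
      ((hc n).log fun x => (hpos n x).ne').aestronglyMeasurable
  unfold IsEqState
  simp only [hlog, entropyKS_eq_map hν, hν, measurePreserving_shiftPlus_map hν, hprob,
    pressure_eq (fun x => ⟨_, projPlus_leftExtend pr hpr x⟩) hc hpos, true_and,
    (inferInstance : IsProbabilityMeasure ν)]

end Comparison

/-- `Φ` has a unique equilibrium state on the one-sided subshift `(Σ_T^+, σ)` if and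
only if `Ψ = Φ∘π` has a unique equilibrium state on the natural extension `(Σ_T, σ)`;
in this case the unique equilibrium state of `Ψ` is the natural extension of the
unique equilibrium state of `Φ`. -/
theorem unique_eqState_iff_natural_extension {q : ℕ} (T : Fin q → Fin q → Bool)
    (hT : IsPrimitive T) (φ : ℕ → SigmaSFTPlus q T → ℝ)
    (hφ : IsSubadditivePotential shiftPlus φ) :
    ((∃! μ : Measure (SigmaSFTPlus q T), IsEqState distSFTPlus shiftPlus φ μ) ↔
      (∃! ν : Measure (SigmaSFT q T),
        IsEqState distSFT shiftSFT (fun n x => φ n (projPlus x)) ν)) ∧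
    ∀ (μ : Measure (SigmaSFTPlus q T)) (ν : Measure (SigmaSFT q T)),
      IsEqState distSFTPlus shiftPlus φ μ →
      (∀ μ' : Measure (SigmaSFTPlus q T), IsEqState distSFTPlus shiftPlus φ μ' → μ' = μ) →
      IsEqState distSFT shiftSFT (fun n x => φ n (projPlus x)) ν →
      (∀ ν' : Measure (SigmaSFT q T),
        IsEqState distSFT shiftSFT (fun n x => φ n (projPlus x)) ν' → ν' = ν) →
      Measure.map projPlus ν = μ := by
  have huniq : ∀ ν ν' : Measure (SigmaSFT q T),
      IsEqState distSFT shiftSFT (fun n x => φ n (projPlus x)) ν →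
      IsEqState distSFT shiftSFT (fun n x => φ n (projPlus x)) ν' →
      ν.map projPlus = ν'.map projPlus → ν = ν' := by
    rintro ν ν' ⟨hν, hνinv, -⟩ ⟨hν', hνinv', -⟩ h
    exact measure_ext_projFrom fun N => by rw [map_projFrom hνinv, map_projFrom hνinv', h]
  have hproj : ∀ ν : Measure (SigmaSFT q T),
      IsEqState distSFT shiftSFT (fun n x => φ n (projPlus x)) ν →
      IsEqState distSFTPlus shiftPlus φ (ν.map projPlus) := by
    intro ν hν
    have := hν.1
    exact (isEqState_iff_map hT hφ hν.2.1).1 hν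
  have hlift : ∀ μ : Measure (SigmaSFTPlus q T), IsEqState distSFTPlus shiftPlus φ μ →
      ∃ ν : Measure (SigmaSFT q T),
        IsEqState distSFT shiftSFT (fun n x => φ n (projPlus x)) ν ∧ ν.map projPlus = μ := by
    intro μ hμ
    have := hμ.1
    obtain ⟨ν, hν, hνinv, rfl⟩ := exists_naturalExtension hT hμ.2.1
    exact ⟨ν, (isEqState_iff_map hT hφ hνinv).2 hμ, rfl⟩
  refine ⟨⟨?_, ?_⟩, fun μ ν _ hμ hν _ => hμ _ (hproj ν hν)⟩
  · rintro ⟨μ, hμ, hμu⟩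
    obtain ⟨ν, hν, rfl⟩ := hlift μ hμ
    exact ⟨ν, hν, fun ν' hν' => huniq _ _ hν' hν (hμu _ (hproj ν' hν'))⟩
  · rintro ⟨ν, hν, hνu⟩
    refine ⟨ν.map projPlus, hproj ν hν, fun μ' hμ' => ?_⟩
    obtain ⟨ν', hν', rfl⟩ := hlift μ' hμ'
    rw [hνu ν' hν']

end SubEq
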